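/- Fix S ⊆ N and j ∉ S. Then the pivot element satisfies A^S_{jj} = (1 − β P_{jj} + β Σ_{k∈S} A^S_{jk} P_{kj}) / (1−β), and A^S_{jj} > 0. (Equation (21) of the paper, together with positivity of the pivot element used by the fast-pivoting algorithm.) -/

import Mathlib

open Matrix BigOperators
open scoped Classical

noncomputable section

/-- Transition matrix of the `S`-active policy: row `i` of `P` if `i ∈ S`,
the `i`-th standard unit row otherwise. -/
def PAct {N : Type*} [DecidableEq N] (P : Matrix N N ℝ) (S : Finset N) : Matrix N N ℝ :=
  fun i j => if i ∈ S then P i j else if i = j then 1 else 0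

/-- Transition matrix of the `Sᶜ`-active policy. -/
def PPas {N : Type*} [DecidableEq N] (P : Matrix N N ℝ) (S : Finset N) : Matrix N N ℝ :=
  fun i j => if i ∈ S then (if i = j then 1 else 0) else P i j

/-- Basis matrix `B^S = I - β P^S`. -/
def BMat {N : Type*} [Fintype N] [DecidableEq N] (β : ℝ) (P : Matrix N N ℝ) (S : Finset N) :
    Matrix N N ℝ := 1 - β • PAct P S

/-- Non-basic matrix `N^S = I - β P^{Sᶜ}`. -/
def NMat {N : Type*} [Fintype N] [DecidableEq N] (β : ℝ) (P : Matrix N N ℝ) (S : Finset N) :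
    Matrix N N ℝ := 1 - β • PPas P S

/-- Basis inverse `H^S = (B^S)⁻¹`. -/
def HMat {N : Type*} [Fintype N] [DecidableEq N] (β : ℝ) (P : Matrix N N ℝ) (S : Finset N) :
    Matrix N N ℝ := (BMat β P S)⁻¹

/-- Tableau matrix `A^S = N^S · H^S`. -/
def AMat {N : Type*} [Fintype N] [DecidableEq N] (β : ℝ) (P : Matrix N N ℝ) (S : Finset N) :
    Matrix N N ℝ := NMat β P S * HMat β P S

/-- Work measure `g^S = H^S · 1_S`. -/
def gWork {N : Type*} [Fintype N] [DecidableEq N] (β : ℝ) (P : Matrix N N ℝ) (S : Finset N) :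
    N → ℝ := (HMat β P S).mulVec (fun j => if j ∈ S then 1 else 0)

/-- Reward measure `f^S = H^S · (R·1_S)`. -/
def fRew {N : Type*} [Fintype N] [DecidableEq N] (β : ℝ) (P : Matrix N N ℝ) (R : N → ℝ)
    (S : Finset N) : N → ℝ := (HMat β P S).mulVec (fun j => if j ∈ S then R j else 0)

/-- Marginal work `w_i^S`. -/
def wMarg {N : Type*} [Fintype N] [DecidableEq N] (β : ℝ) (P : Matrix N N ℝ) (S : Finset N)
    (i : N) : ℝ :=
  if i ∈ S then (1 - β) * gWork β P S i
  else 1 + β * ∑ j ∈ S, P i j * gWork β P S j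

/-- Marginal reward `r_i^S`. -/
def rMarg {N : Type*} [Fintype N] [DecidableEq N] (β : ℝ) (P : Matrix N N ℝ) (R : N → ℝ)
    (S : Finset N) (i : N) : ℝ :=
  if i ∈ S then (1 - β) * fRew β P R S i
  else R i + β * ∑ j ∈ S, P i j * fRew β P R S j

/-- Marginal productivity rate `ν_i^S = r_i^S / w_i^S`. -/
def nuMarg {N : Type*} [Fintype N] [DecidableEq N] (β : ℝ) (P : Matrix N N ℝ) (R : N → ℝ)
    (S : Finset N) (i : N) : ℝ := rMarg β P R S i / wMarg β P S i

/-- Feasibility of a pair of row vectors `(x⁰, x¹)` for initial state `i`: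
`x⁰, x¹ ≥ 0` and `(1-β) x⁰ + x¹ (I - β P) = e_i`. -/
def Feasible {N : Type*} [Fintype N] [DecidableEq N] (β : ℝ) (P : Matrix N N ℝ) (i : N)
    (x0 x1 : N → ℝ) : Prop :=
  (∀ j, 0 ≤ x0 j) ∧ (∀ j, 0 ≤ x1 j) ∧
    (1 - β) • x0 + Matrix.vecMul x1 (1 - β • P) = Pi.single i 1

/-- Modified reward vector `R̂ = R - (I - βP)·Q`. -/
def Rhat {N : Type*} [Fintype N] [DecidableEq N] (β : ℝ) (P : Matrix N N ℝ) (R Q : N → ℝ) :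
    N → ℝ := fun i => R i - ((1 - β • P).mulVec Q) i

/-!
Call a real matrix *positively diagonally dominant* if each diagonal entry exceeds the sum of the
absolute values of the other entries in its row. Then `A v` has the sign of `v` wherever `|v|` is
maximal and nonzero. Applied to a column of `A⁻¹`, this forces the column to be largest, and
positive, at its diagonal entry; applied once more with another dominant matrix `C` in place of `A`,
it gives `0 < (C * A⁻¹) j j`. For stochastic `P` and `0 < β < 1` the matrix `I - β P` is dominant,
hence so is every `B^S`, whose rows are those of `I - β P` or of `(1 - β) I`. As `N^S = B^(Sᶜ)`, the
pivot of `A^S = N^S (B^S)⁻¹` is positive. Its formula is the `(j, j)` entry of `A^S B^S = N^S`.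
-/

lemma mulVec_col_nonsing_inv {n R : Type*} [Fintype n] [DecidableEq n] [CommRing R]
    {A : Matrix n n R} (hA : IsUnit A.det) (j : n) : A *ᵥ A⁻¹.col j = Pi.single j 1 := by
  rw [← mulVec_single_one, mulVec_mulVec, mul_nonsing_inv _ hA, one_mulVec]

section DiagonalDominance

variable {n R : Type*} [Fintype n] [DecidableEq n] [CommRing R] [LinearOrder R]

/-- Strict row diagonal dominance with a positive diagonal: the form of diagonal dominance, shared
by all the basis matrices, that controls signs as well as invertibility. The diagonal entry is
compared without absolute value, which makes it positive. -/
def IsPosDiagDominant (A : Matrix n n R) : Prop :=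
  ∀ i, ∑ k ∈ Finset.univ.erase i, |A i k| < A i i

namespace IsPosDiagDominant

section OrderedRing

variable [IsStrictOrderedRing R] {A : Matrix n n R}

lemma diag_pos (hA : IsPosDiagDominant A) (i : n) : 0 < A i i :=
  (Finset.sum_nonneg fun _ _ => abs_nonneg _).trans_lt (hA i)

lemma one_sub_of_sum_abs_lt_one {M : Matrix n n R} (hM : ∀ i, ∑ k, |M i k| < 1) :
    IsPosDiagDominant (1 - M) := by
  intro i
  have off_diag : ∑ k ∈ Finset.univ.erase i, |(1 - M) i k| =
      ∑ k ∈ Finset.univ.erase i, |M i k| :=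
    Finset.sum_congr rfl fun k hk => by simp [one_apply_ne (Finset.ne_of_mem_erase hk).symm]
  have row_sum := Finset.add_sum_erase Finset.univ (fun k => |M i k|) (Finset.mem_univ i)
  rw [off_diag, Matrix.sub_apply, one_apply_eq]
  linarith [hM i, le_abs_self (M i i)]

lemma mul_mulVec_pos (hA : IsPosDiagDominant A) {v : n → R} {m : n}
    (hmax : ∀ k, |v k| ≤ |v m|) (hm : v m ≠ 0) : 0 < v m * (A *ᵥ v) m := by
  have off_diag (k : n) : -(|A m k| * v m ^ 2) ≤ v m * (A m k * v k) := by
    refine (neg_le_neg ?_).trans (neg_abs_le _)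
    calc |v m * (A m k * v k)| = |A m k| * (|v m| * |v k|) := by simp only [abs_mul]; ring
      _ ≤ |A m k| * (|v m| * |v m|) := by gcongr |A m k| * (|v m| * ?_); exact hmax k
      _ = |A m k| * v m ^ 2 := by rw [abs_mul_abs_self, sq]
  calc 0 < (A m m - ∑ k ∈ Finset.univ.erase m, |A m k|) * v m ^ 2 :=
        mul_pos (sub_pos.2 (hA m)) (sq_pos_of_ne_zero hm)
    _ = v m * (A m m * v m) + ∑ k ∈ Finset.univ.erase m, -(|A m k| * v m ^ 2) := by
        rw [Finset.sum_neg_distrib, ← Finset.sum_mul]; ring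
    _ ≤ v m * (A m m * v m) + ∑ k ∈ Finset.univ.erase m, v m * (A m k * v k) := by
        gcongr with k; exact off_diag k
    _ = v m * (A *ᵥ v) m := by
        rw [← Finset.mul_sum, ← mul_add,
          Finset.add_sum_erase _ (fun k => A m k * v k) (Finset.mem_univ m)]
        rfl

lemma abs_le_of_mulVec_eq_zero (hA : IsPosDiagDominant A) {v : n → R} {j : n}
    (hv : ∀ i ≠ j, (A *ᵥ v) i = 0) (k : n) : |v k| ≤ |v j| := by
  have : Nonempty n := ⟨j⟩
  obtain ⟨m, hmax⟩ := Finite.exists_max fun i => |v i|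
  refine (hmax k).trans ?_
  rcases eq_or_ne m j with rfl | hmj
  · exact le_rfl
  · have hm : v m = 0 := by
      by_contra hm
      simpa [hv m hmj] using hA.mul_mulVec_pos hmax hm
    simp [hm]

end OrderedRing

variable {A C : Matrix n n ℝ}

lemma isUnit_det (hA : IsPosDiagDominant A) : IsUnit A.det :=
  isUnit_iff_ne_zero.2 <| det_ne_zero_of_sum_row_lt_diag fun i => by
    simpa only [Real.norm_eq_abs, abs_of_pos (hA.diag_pos i)] using hA i

lemma abs_inv_apply_le (hA : IsPosDiagDominant A) (k j : n) : |A⁻¹ k j| ≤ |A⁻¹ j j| :=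
  hA.abs_le_of_mulVec_eq_zero (v := A⁻¹.col j)
    (fun i hi => by rw [mulVec_col_nonsing_inv hA.isUnit_det, Pi.single_eq_of_ne hi]) k

lemma inv_apply_self_ne_zero (hA : IsPosDiagDominant A) (j : n) : A⁻¹ j j ≠ 0 := by
  intro hj
  have col_eq_zero : A⁻¹.col j = 0 :=
    funext fun k => abs_nonpos_iff.1 <| by simpa [hj] using hA.abs_inv_apply_le k j
  simpa [col_eq_zero] using congrFun (mulVec_col_nonsing_inv hA.isUnit_det j) j

lemma inv_apply_self_pos (hA : IsPosDiagDominant A) (j : n) : 0 < A⁻¹ j j := by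
  simpa [mulVec_col_nonsing_inv hA.isUnit_det] using
    hA.mul_mulVec_pos (v := A⁻¹.col j) (fun k => hA.abs_inv_apply_le k j)
      (hA.inv_apply_self_ne_zero j)

lemma mul_inv_apply_self_pos (hC : IsPosDiagDominant C) (hA : IsPosDiagDominant A) (j : n) :
    0 < (C * A⁻¹) j j :=
  pos_of_mul_pos_right
    (hC.mul_mulVec_pos (v := A⁻¹.col j) (fun k => hA.abs_inv_apply_le k j)
      (hA.inv_apply_self_ne_zero j))
    (hA.inv_apply_self_pos j).le

end IsPosDiagDominant

end DiagonalDominance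

section Tableau

variable {N : Type*} [Fintype N] [DecidableEq N] {β : ℝ} {P : Matrix N N ℝ} {S : Finset N} {i j : N}

lemma bMat_apply_of_mem (hi : i ∈ S) (k : N) : BMat β P S i k = (1 - β • P) i k := by
  simp [BMat, PAct, hi]

lemma bMat_apply_of_notMem (hi : i ∉ S) (k : N) :
    BMat β P S i k = ((1 - β) • (1 : Matrix N N ℝ)) i k := by
  rcases eq_or_ne i k with rfl | hik
  · simp [BMat, PAct, hi]
  · simp [BMat, PAct, hi, hik]

lemma nMat_eq_bMat_compl (β : ℝ) (P : Matrix N N ℝ) (S : Finset N) :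
    NMat β P S = BMat β P Sᶜ := by
  have : PPas P S = PAct P Sᶜ := by
    ext i k
    by_cases hi : i ∈ S <;> simp [PPas, PAct, hi]
  rw [NMat, BMat, this]

lemma isPosDiagDominant_bMat (hβ : β < 1) (hP : IsPosDiagDominant (1 - β • P)) (S : Finset N) :
    IsPosDiagDominant (BMat β P S) := by
  intro i
  by_cases hi : i ∈ S
  · simpa only [bMat_apply_of_mem hi] using hP i
  · have off_diag : ∑ k ∈ Finset.univ.erase i, |BMat β P S i k| = 0 :=
      Finset.sum_eq_zero fun k hk => by
        simp [bMat_apply_of_notMem hi, one_apply_ne (Finset.ne_of_mem_erase hk).symm]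
    rw [off_diag, bMat_apply_of_notMem hi]
    simpa using hβ

lemma aMat_apply_self_pos (hβ : β < 1) (hP : IsPosDiagDominant (1 - β • P)) (S : Finset N)
    (j : N) : 0 < AMat β P S j j := by
  rw [AMat, HMat, nMat_eq_bMat_compl]
  exact (isPosDiagDominant_bMat hβ hP Sᶜ).mul_inv_apply_self_pos (isPosDiagDominant_bMat hβ hP S) j

lemma aMat_mul_bMat (hB : IsUnit (BMat β P S).det) : AMat β P S * BMat β P S = NMat β P S :=
  nonsing_inv_mul_cancel_right _ _ hB

lemma mul_bMat_apply_of_notMem {m : Type*} (X : Matrix m N ℝ) (l : m) (hj : j ∉ S) :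
    (X * BMat β P S) l j = (1 - β) * X l j - β * ∑ k ∈ S, X l k * P k j := by
  have active : ∑ k ∈ S, X l k * BMat β P S k j = -(β * ∑ k ∈ S, X l k * P k j) := by
    rw [Finset.mul_sum, ← Finset.sum_neg_distrib]
    refine Finset.sum_congr rfl fun k hk => ?_
    rw [bMat_apply_of_mem hk, Matrix.sub_apply, one_apply_ne (ne_of_mem_of_not_mem hk hj),
      Matrix.smul_apply, smul_eq_mul]
    ring
  have passive : ∑ k ∈ Sᶜ, X l k * BMat β P S k j = (1 - β) * X l j := by
    rw [Finset.sum_eq_single_of_mem j (Finset.mem_compl.2 hj)]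
    · simp [bMat_apply_of_notMem hj, mul_comm]
    · intro k hk hkj
      simp [bMat_apply_of_notMem (Finset.mem_compl.1 hk), hkj]
  rw [mul_apply, ← Finset.sum_add_sum_compl S, active, passive]
  ring

lemma aMat_apply_self_eq (hβ : β ≠ 1) (hB : IsUnit (BMat β P S).det) (hj : j ∉ S) :
    AMat β P S j j =
      (1 - β * P j j + β * ∑ k ∈ S, AMat β P S j k * P k j) / (1 - β) := by
  have entry : (1 - β) * AMat β P S j j - β * ∑ k ∈ S, AMat β P S j k * P k j =
      1 - β * P j j := by
    rw [← mul_bMat_apply_of_notMem _ _ hj, aMat_mul_bMat hB, nMat_eq_bMat_compl,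
      bMat_apply_of_mem (Finset.mem_compl.2 hj)]
    simp
  rw [eq_div_iff (sub_ne_zero.2 hβ.symm)]
  linarith

end Tableau

theorem stmt15_general {N : Type*} [Fintype N] [DecidableEq N]
    (P : Matrix N N ℝ) (β : ℝ) (hβ : β < 1) (hP : IsPosDiagDominant (1 - β • P))
    (S : Finset N) (j : N) (hj : j ∉ S) :
    AMat β P S j j
      = (1 - β * P j j + β * ∑ k ∈ S, AMat β P S j k * P k j) / (1 - β) ∧
    0 < AMat β P S j j :=
  ⟨aMat_apply_self_eq hβ.ne (isPosDiagDominant_bMat hβ hP S).isUnit_det hj,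
    aMat_apply_self_pos hβ hP S j⟩

/-- equation (21): formula and positivity of the pivot element. -/
theorem stmt15 {N : Type*} [Fintype N] [DecidableEq N] [Nonempty N]
    (P : Matrix N N ℝ) (hP0 : ∀ i j, 0 ≤ P i j) (hP1 : ∀ i, ∑ j, P i j = 1)
    (β : ℝ) (hβ0 : 0 < β) (hβ1 : β < 1)
    (S : Finset N) (j : N) (hj : j ∉ S) :
    AMat β P S j j
      = (1 - β * P j j + β * ∑ k ∈ S, AMat β P S j k * P k j) / (1 - β) ∧
    0 < AMat β P S j j := by
  refine stmt15_general P β hβ1 (.one_sub_of_sum_abs_lt_one fun i => ?_) S j hj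
  simpa [abs_mul, abs_of_pos hβ0, abs_of_nonneg (hP0 _ _), ← Finset.mul_sum, hP1] using hβ1
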